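/- Cross-place communication events in the semantics of transformed phrases satisfy the protection criterion: for every Copland phrase t, place p, evidence e, and position φ, if v is a cross-place communication event of the data flow graph C(epp(t,p,e),p,φ,e), then τ(ε(v)) ⊆ {ϱ(v)}. -/

import Mathlib

namespace Copland

/-- Places are drawn from a countable set. -/
abbrev Place := ℕ
/-- Symbols (measurement/target identifiers) are drawn from a countable set. -/
abbrev Symb := ℕ

/-- Splitting specifications: `+` or `-`. -/
inductive Split where
  | plus
  | minus
deriving DecidableEq, Repr

/-- Copland phrases. -/
inductive Phrase where
  | meas : Symb → Place → Symb → Phrase          -- measurement  m q s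
  | att  : Place → Phrase → Phrase               -- @_q [ t ]
  | copy : Phrase                                 -- _
  | sign : Phrase                                 -- !
  | hash : Phrase                                 -- #
  | lseq : Phrase → Phrase → Phrase               -- t1 → t2
  | bseq : Split → Split → Phrase → Phrase → Phrase  -- t1 d1<d2 t2
  | bpar : Split → Split → Phrase → Phrase → Phrase  -- t1 d1~d2 t2
deriving DecidableEq, Repr

/-- Evidence terms. -/
inductive Evidence where
  | empty : Evidence                                          -- ξ
  | meas : Symb → Place → Symb → Place → List ℕ → Evidence → Evidence  -- m(ms(m,q,s),p,φ,e)
  | sig  : Evidence → Place → Evidence                        -- [[e]]_p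
  | hash : Evidence → Place → Evidence                        -- #{e}_p
  | seqc : Evidence → Evidence → Evidence                     -- e1 ;; e2
  | parc : Evidence → Evidence → Evidence                     -- e1 || e2
deriving DecidableEq, Repr

/-- The effect `d(e)` of a splitting specification on evidence. -/
def splitEv : Split → Evidence → Evidence
  | .plus, e => e
  | .minus, _ => .empty

/-- The Copland evidence semantics `E(t,p,φ,e)`. -/
def eval : Phrase → Place → List ℕ → Evidence → Evidence
  | .meas m q s, p, φ, e => .meas m q s p φ e
  | .copy, _, _, e => e
  | .sign, p, _, e => .sig e p
  | .hash, p, _, e => .hash e p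
  | .att q t, _, φ, e => eval t q (1 :: φ) e
  | .lseq t1 t2, p, φ, e => eval t2 p (2 :: φ) (eval t1 p (1 :: φ) e)
  | .bseq d1 d2 t1 t2, p, φ, e =>
      .seqc (eval t1 p (1 :: φ) (splitEv d1 e)) (eval t2 p (2 :: φ) (splitEv d2 e))
  | .bpar d1 d2 t1 t2, p, φ, e =>
      .parc (eval t1 p (1 :: φ) (splitEv d1 e)) (eval t2 p (2 :: φ) (splitEv d2 e))

/-- Join operators: sequential `<` or parallel `~`. -/
inductive JoinOp where
  | seqJ
  | parJ
deriving DecidableEq, Repr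

/-- Event labels. -/
inductive Label where
  | msp   : Place → Evidence → Label                    -- p : msp(e)
  | cpy   : Place → Evidence → Label                    -- p : cpy(e)
  | sig   : Place → Evidence → Label                    -- p : sig(e)
  | hsh   : Place → Evidence → Label                    -- p : hsh(e)
  | req   : Place → Place → Evidence → Label            -- p : req(q,e)
  | rpy   : Place → Place → Evidence → Label            -- p : rpy(q,e)
  | split : Place → Split → Split → Evidence → Label    -- p : split(d1,d2,e)
  | join  : Place → JoinOp → Evidence → Label           -- p : join(o,e)
deriving DecidableEq, Repr

/-- The (sending) place `ϱ(v)`: the place before the colon in the label. -/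
def Label.place : Label → Place
  | .msp p _ => p
  | .cpy p _ => p
  | .sig p _ => p
  | .hsh p _ => p
  | .req p _ _ => p
  | .rpy p _ _ => p
  | .split p _ _ _ => p
  | .join p _ _ => p

/-- The receiving place `ϱ'(v)`. -/
def Label.recvPlace : Label → Place
  | .req _ q _ => q
  | .rpy _ q _ => q
  | l => l.place

/-- The evidence `ε(v)`: the last argument of the label. -/
def Label.evid : Label → Evidence
  | .msp _ e => e
  | .cpy _ e => e
  | .sig _ e => e
  | .hsh _ e => e
  | .req _ _ e => e
  | .rpy _ _ e => e
  | .split _ _ _ e => e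
  | .join _ _ e => e

/-- A measurement event is one whose label has the form `p : msp(e)`. -/
def Label.IsMeas (l : Label) : Prop := ∃ p e, l = .msp p e

/-- A cross-place communication event is one with `ϱ(v) ≠ ϱ'(v)`. -/
def Label.IsCross (l : Label) : Prop := l.place ≠ l.recvPlace

/-- A data flow graph: events are the naturals `0, …, n-1`, with an input event,
an output event, flow edges, and a labeling. -/
structure DFG where
  n : ℕ
  vin : ℕ
  vout : ℕ
  edges : List (ℕ × ℕ)
  label : ℕ → Label

namespace DFG

/-- Well-formedness of a data flow graph: events are in range, the flow
relation is acyclic, and there is no edge into the input event nor out of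
the output event. -/
def WF (G : DFG) : Prop :=
  G.vin < G.n ∧ G.vout < G.n ∧
  (∀ pr ∈ G.edges, pr.1 < G.n ∧ pr.2 < G.n) ∧
  (∀ v, ¬ Relation.TransGen (fun a b => (a, b) ∈ G.edges) v v) ∧
  (∀ pr ∈ G.edges, pr.2 ≠ G.vin ∧ pr.1 ≠ G.vout)

/-- The single-event data flow graph. -/
def single (l : Label) : DFG :=
  { n := 1, vin := 0, vout := 0, edges := [], label := fun _ => l }

/-- Before-copy composition: the second graph's events are renumbered after the
first's, and a flow edge links the output of the first to the input of the second. -/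
def seqComp (G1 G2 : DFG) : DFG :=
  { n := G1.n + G2.n
    vin := G1.vin
    vout := G1.n + G2.vout
    edges := G1.edges ++ G2.edges.map (fun pr => (G1.n + pr.1, G1.n + pr.2)) ++
      [(G1.vout, G1.n + G2.vin)]
    label := fun i => if i < G1.n then G1.label i else G2.label (i - G1.n) }

/-- Branching composition: a split event, the two subgraphs (with a flow edge from
the split into the input of a subgraph exactly when the corresponding splitting
specification is `+`), and a join event receiving flow from both outputs. -/
def branch (sp jn : Label) (d1 d2 : Split) (G1 G2 : DFG) : DFG :=
  { n := G1.n + G2.n + 2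
    vin := 0
    vout := G1.n + G2.n + 1
    edges :=
      G1.edges.map (fun pr => (pr.1 + 1, pr.2 + 1)) ++
      G2.edges.map (fun pr => (pr.1 + 1 + G1.n, pr.2 + 1 + G1.n)) ++
      (if d1 = Split.plus then [(0, G1.vin + 1)] else []) ++
      (if d2 = Split.plus then [(0, G2.vin + 1 + G1.n)] else []) ++
      [(G1.vout + 1, G1.n + G2.n + 1), (G2.vout + 1 + G1.n, G1.n + G2.n + 1)]
    label := fun i =>
      if i = 0 then sp
      else if i < G1.n + 1 then G1.label (i - 1)
      else if i < G1.n + G2.n + 1 then G2.label (i - 1 - G1.n)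
      else jn }

end DFG

/-- The Copland data flow semantics `C(t,p,φ,e)`. -/
def sem : Phrase → Place → List ℕ → Evidence → DFG
  | .meas m q s, p, φ, e => .single (.msp p (.meas m q s p φ e))
  | .copy, p, _, e => .single (.cpy p e)
  | .sign, p, _, e => .single (.sig p (.sig e p))
  | .hash, p, _, e => .single (.hsh p (.hash e p))
  | .att q t, p, φ, e =>
      (DFG.single (.req p q e)).seqComp
        ((sem t q (1 :: φ) e).seqComp (.single (.rpy q p (eval t q (1 :: φ) e))))
  | .lseq t1 t2, p, φ, e =>
      (sem t1 p (1 :: φ) e).seqComp (sem t2 p (2 :: φ) (eval t1 p (1 :: φ) e))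
  | .bseq d1 d2 t1 t2, p, φ, e =>
      DFG.branch (.split p d1 d2 e)
        (.join p .seqJ (eval (.bseq d1 d2 t1 t2) p φ e)) d1 d2
        (sem t1 p (1 :: φ) (splitEv d1 e)) (sem t2 p (2 :: φ) (splitEv d2 e))
  | .bpar d1 d2 t1 t2, p, φ, e =>
      DFG.branch (.split p d1 d2 e)
        (.join p .parJ (eval (.bpar d1 d2 t1 t2) p φ e)) d1 d2
        (sem t1 p (1 :: φ) (splitEv d1 e)) (sem t2 p (2 :: φ) (splitEv d2 e))

namespace DFG

/-- A path of a data flow graph: a nonempty sequence of events of the graph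
successively related by flow edges. -/
def IsPath (G : DFG) (π : List ℕ) : Prop :=
  π ≠ [] ∧ (∀ v ∈ π, v < G.n) ∧ π.Chain' (fun a b => (a, b) ∈ G.edges)

/-- One step of the tamper set computation. -/
def tsStep (G : DFG) (s : Set Place) (v : ℕ) : Set Place :=
  match G.label v with
  | .sig p _ => {p} ∩ s
  | _ => s

/-- The tamper set `ts(π)` of a path: `ts(⟨v⟩)` is the set of all places if `v` is a
measurement event and `∅` otherwise; `ts(π § v) = {p} ∩ ts(π)` if `ℓ(v) = p:sig(e)`,
and `ts(π § v) = ts(π)` otherwise. -/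
def ts (G : DFG) (π : List ℕ) : Set Place :=
  match π with
  | [] => ∅
  | v :: rest =>
      rest.foldl (tsStep G)
        (match G.label v with
          | .msp _ _ => Set.univ
          | _ => ∅)

/-- A path is `p`-signing iff every signature event on it occurs at `p`. -/
def Signing (G : DFG) (π : List ℕ) (p : Place) : Prop :=
  ∀ v ∈ π, ∀ q e, G.label v = .sig q e → q = p

/-- A path `π = ⟨v, …, v'⟩` permits tampering (at `v'` with the evidence from `v`)
iff (1) `v` is a measurement event, (2) the length of `π` exceeds 1, and
(3) `π` is `ϱ(v')`-signing or `ϱ'(v')`-signing. -/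
def PermitsTamper (G : DFG) (π : List ℕ) : Prop :=
  (∀ v, π.head? = some v → (G.label v).IsMeas) ∧
  1 < π.length ∧
  (∀ v', π.getLast? = some v' →
    G.Signing π (G.label v').place ∨ G.Signing π (G.label v').recvPlace)

/-- A path `⟨v1,…,vn⟩` is local to place `p` iff every interior event has both
sending and receiving place `p`, and each endpoint has sending or receiving place `p`. -/
def LocalTo (G : DFG) (π : List ℕ) (p : Place) : Prop :=
  (∀ i v, 0 < i → i + 1 < π.length → π[i]? = some v →
      (G.label v).place = p ∧ (G.label v).recvPlace = p) ∧
  (∀ v, π.head? = some v → (G.label v).place = p ∨ (G.label v).recvPlace = p) ∧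
  (∀ v, π.getLast? = some v → (G.label v).place = p ∨ (G.label v).recvPlace = p)

/-- `π` is a path of `G` from `v` to `v'`. -/
def PathBetween (G : DFG) (v v' : ℕ) (π : List ℕ) : Prop :=
  G.IsPath π ∧ π.head? = some v ∧ π.getLast? = some v'

/-- A set `S` of events of `G` is a tamper strategy for `v` iff every path from `v`
to the output event of `G` contains an event `v' ∈ S` such that the prefix
`⟨v, …, v'⟩` of the path permits tampering. -/
def TamperStrategy (G : DFG) (S : Set ℕ) (v : ℕ) : Prop :=
  (∀ w ∈ S, w < G.n) ∧
  ∀ π, G.PathBetween v G.vout π →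
    ∃ v' ∈ S, ∃ π', π' <+: π ∧ π'.getLast? = some v' ∧ G.PermitsTamper π'

/-- `S` is a minimal tamper strategy for `v` iff it is a tamper strategy for `v` and
every tamper strategy for `v` included in `S` equals `S`. -/
def MinimalTamperStrategy (G : DFG) (S : Set ℕ) (v : ℕ) : Prop :=
  G.TamperStrategy S v ∧ ∀ S', G.TamperStrategy S' v → S' ⊆ S → S' = S

/-- A path `π = ⟨v1,…,vn⟩` is protected iff either `v1` is not a measurement event,
or for every `1 < i ≤ n`, if `vi` is a cross-place communication event then
`ts(⟨v1,…,vi⟩) ⊆ {ϱ(vi)}`. -/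
def ProtectedPath (G : DFG) (π : List ℕ) : Prop :=
  (∀ v, π.head? = some v → ¬ (G.label v).IsMeas) ∨
  (∀ i v, 0 < i → i < π.length → π[i]? = some v → (G.label v).IsCross →
      G.ts (π.take (i + 1)) ⊆ {(G.label v).place})

/-- A data flow graph is protected iff all of its paths are protected. -/
def Protected (G : DFG) : Prop :=
  ∀ π, G.IsPath π → G.ProtectedPath π

end DFG

/-- The tamper places function `τ` on evidence. -/
def tau : Evidence → Set Place
  | .empty => ∅
  | .meas _ _ _ _ _ _ => Set.univ
  | .hash e _ => tau e
  | .sig e p => {p} ∩ tau e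
  | .seqc e1 e2 => tau e1 ∪ tau e2
  | .parc e1 e2 => tau e1 ∪ tau e2

open scoped Classical in
/-- The Evidence Protection Program `epp(t,p,e)`. -/
noncomputable def epp : Phrase → Place → Evidence → Phrase
  | .meas m q s, _, _ => .meas m q s
  | .copy, _, _ => .copy
  | .sign, _, _ => .sign
  | .hash, _, _ => .hash
  | .lseq t1 t2, p, e =>
      .lseq (epp t1 p e) (epp t2 p (eval (epp t1 p e) p [] e))
  | .att q t, p, e =>
      if q = p then .att q (epp t p e)
      else if tau e ⊆ {p} then
        if tau (eval (epp t q e) q [] e) ⊆ {q} then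
          .att q (epp t q e)
        else
          .att q (.lseq (epp t q e) .sign)
      else
        if tau (eval (epp t q (.sig e p)) q [] (.sig e p)) ⊆ {q} then
          .lseq .sign (.att q (epp t q (.sig e p)))
        else
          .lseq .sign (.att q (.lseq (epp t q (.sig e p)) .sign))
  | .bseq d1 d2 t1 t2, p, e =>
      .bseq d1 d2 (epp t1 p (splitEv d1 e)) (epp t2 p (splitEv d2 e))
  | .bpar d1 d2 t1 t2, p, e =>
      .bpar d1 d2 (epp t1 p (splitEv d1 e)) (epp t2 p (splitEv d2 e))

end Copland

namespace Copland

theorem tau_splitEv_congr (d : Split) {e e' : Evidence} (h : tau e = tau e') :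
    tau (splitEv d e) = tau (splitEv d e') := by
  cases d
  · exact h
  · rfl

/-- The tamper places of evaluated evidence depend neither on the position nor on anything
but the tamper places of the initial evidence. -/
theorem tau_eval_congr (t : Phrase) (p : Place) (φ ψ : List ℕ) {e e' : Evidence}
    (h : tau e = tau e') : tau (eval t p φ e) = tau (eval t p ψ e') := by
  induction t generalizing p φ ψ e e' with
  | meas m q s => rfl
  | copy => exact h
  | sign => simp only [eval, tau, h]
  | hash => exact h
  | att q t ih => exact ih q _ _ h
  | lseq t1 t2 ih1 ih2 => exact ih2 p _ _ (ih1 p _ _ h)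
  | bseq d1 d2 t1 t2 ih1 ih2 | bpar d1 d2 t1 t2 ih1 ih2 =>
    exact congrArg₂ _ (ih1 p _ _ (tau_splitEv_congr d1 h)) (ih2 p _ _ (tau_splitEv_congr d2 h))

/-- The transformed phrase depends only on the tamper places of the initial evidence. -/
theorem epp_congr (t : Phrase) (p : Place) {e e' : Evidence} (h : tau e = tau e') :
    epp t p e = epp t p e' := by
  induction t generalizing p e e' with
  | meas m q s => rfl
  | copy => rfl
  | sign => rfl
  | hash => rfl
  | att q t ih =>
    have hs : tau (.sig e p) = tau (.sig e' p) := by simp only [tau, h]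
    rw [epp, epp, ih p h, ih q h, ih q hs, h, tau_eval_congr _ q [] [] h,
      tau_eval_congr _ q [] [] hs]
  | lseq t1 t2 ih1 ih2 =>
    simp only [epp, ih1 p h, ih2 p (tau_eval_congr _ p [] [] h)]
  | bseq d1 d2 t1 t2 ih1 ih2 | bpar d1 d2 t1 t2 ih1 ih2 =>
    simp only [epp, ih1 p (tau_splitEv_congr d1 h), ih2 p (tau_splitEv_congr d2 h)]

/-- A label satisfies the protection criterion iff, when it is a cross-place communication,
its evidence can be tampered with at most at its sending place. -/
def Label.Guarded (l : Label) : Prop := l.IsCross → tau l.evid ⊆ {l.place}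

theorem Label.guarded_of_place_eq {l : Label} (h : l.place = l.recvPlace) : l.Guarded :=
  fun hc => absurd h hc

/-- Every event of the graph satisfies the protection criterion. -/
def DFG.Guarded (G : DFG) : Prop := ∀ v < G.n, (G.label v).Guarded

theorem DFG.guarded_single {l : Label} (h : l.Guarded) : (DFG.single l).Guarded :=
  fun _ _ => h

theorem DFG.Guarded.seqComp {G1 G2 : DFG} (h1 : G1.Guarded) (h2 : G2.Guarded) :
    (G1.seqComp G2).Guarded := by
  intro v hv
  simp only [DFG.seqComp] at hv ⊢
  split_ifs with h
  · exact h1 v h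
  · exact h2 _ (by omega)

theorem DFG.Guarded.branch {sp jn : Label} (hsp : sp.Guarded) (hjn : jn.Guarded)
    (d1 d2 : Split) {G1 G2 : DFG} (h1 : G1.Guarded) (h2 : G2.Guarded) :
    (DFG.branch sp jn d1 d2 G1 G2).Guarded := by
  intro v hv
  simp only [DFG.branch]
  split_ifs
  · exact hsp
  · exact h1 _ (by omega)
  · exact h2 _ (by omega)
  · exact hjn

theorem guarded_sem_sign (p : Place) (φ : List ℕ) (e : Evidence) :
    (sem .sign p φ e).Guarded :=
  DFG.guarded_single (Label.guarded_of_place_eq rfl)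

theorem guarded_sem_att {q p : Place} {t : Phrase} {φ : List ℕ} {e : Evidence}
    (ht : (sem t q (1 :: φ) e).Guarded)
    (hreq : p ≠ q → tau e ⊆ {p}) (hrpy : q ≠ p → tau (eval t q (1 :: φ) e) ⊆ {q}) :
    (sem (.att q t) p φ e).Guarded :=
  (DFG.guarded_single (l := .req p q e) hreq).seqComp
    (ht.seqComp (DFG.guarded_single (l := .rpy q p (eval t q (1 :: φ) e)) hrpy))

theorem tau_sig_subset (e : Evidence) (p : Place) : tau (.sig e p) ⊆ {p} :=
  Set.inter_subset_left

theorem guarded_sem_epp (t : Phrase) (p : Place) (φ : List ℕ) (e : Evidence) :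
    (sem (epp t p e) p φ e).Guarded := by
  induction t generalizing p φ e with
  | meas m q s | copy | sign | hash =>
    exact DFG.guarded_single (Label.guarded_of_place_eq rfl)
  | lseq t1 t2 ih1 ih2 =>
    rw [epp, epp_congr t2 p (tau_eval_congr _ p [] (1 :: φ) rfl)]
    exact (ih1 p _ e).seqComp (ih2 p _ _)
  | bseq d1 d2 t1 t2 ih1 ih2 | bpar d1 d2 t1 t2 ih1 ih2 =>
    exact DFG.Guarded.branch (Label.guarded_of_place_eq rfl) (Label.guarded_of_place_eq rfl) d1 d2
      (ih1 p _ _) (ih2 p _ _)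
  | att q t ih =>
    rw [epp]
    split_ifs with hqp he h1 h2
    · subst hqp
      exact guarded_sem_att (ih q _ e) (fun h => absurd rfl h) (fun h => absurd rfl h)
    · exact guarded_sem_att (ih q _ e) (fun _ => he)
        (fun _ => (tau_eval_congr _ q _ [] rfl).trans_subset h1)
    · exact guarded_sem_att ((ih q _ e).seqComp (guarded_sem_sign q _ _)) (fun _ => he)
        (fun _ => tau_sig_subset _ q)
    · exact (guarded_sem_sign p _ e).seqComp (guarded_sem_att (ih q _ _)
        (fun _ => tau_sig_subset e p) (fun _ => (tau_eval_congr _ q _ [] rfl).trans_subset h2))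
    · exact (guarded_sem_sign p _ e).seqComp (guarded_sem_att
        ((ih q _ _).seqComp (guarded_sem_sign q _ _))
        (fun _ => tau_sig_subset e p) (fun _ => tau_sig_subset _ q))

end Copland

open Copland in
/-- Cross-place communication events in the semantics of transformed phrases
satisfy the protection criterion: if `v` is a cross-place communication event of
`C(epp(t,p,e),p,φ,e)`, then `τ(ε(v)) ⊆ {ϱ(v)}`. -/
theorem tau_sub_sndp (t : Phrase) (p : Place) (e : Evidence) (φ : List ℕ)
    (v : ℕ) (hv : v < (sem (epp t p e) p φ e).n)
    (hc : ((sem (epp t p e) p φ e).label v).IsCross) :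
    tau (((sem (epp t p e) p φ e).label v).evid) ⊆
      {((sem (epp t p e) p φ e).label v).place} := by
  exact guarded_sem_epp t p φ e v hv hc
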